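/- For all integers k, q ≥ 1, the quantum transition capacity satisfies ⟦SIZE[k(q−1)] ∖ CHN^q → CHN^{q+1}⟧_k ≤ e·k·√(10·k·q·T/M), where e is Euler's number. -/

import Mathlib

noncomputable section

/- `Ȳ = Y ∪ {⊥}` is modeled by `Option Y` (`⊥ = none`), databases by `X → Option Y`,
and `ℂ[DB]` by `EuclideanSpace ℂ (X → Option Y)`. -/

/-- matrix (in the computational basis) of the single-register unitary `Comp` -/
def compMat (Y : Type*) [Fintype Y] [DecidableEq Y] :
    Matrix (Option Y) (Option Y) ℂ :=
  Matrix.of fun u v =>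
    match u, v with
    | none, none => 0
    | some _, none => ((Real.sqrt (Fintype.card Y) : ℝ) : ℂ)⁻¹
    | none, some _ => ((Real.sqrt (Fintype.card Y) : ℝ) : ℂ)⁻¹
    | some a, some b => (if a = b then (1 : ℂ) else 0) - ((Fintype.card Y : ℕ) : ℂ)⁻¹

/-- matrix of the diagonal unitary `O_ŷ` associated to a character `ŷ` of `Y` -/
def oMat {Y : Type*} [Fintype Y] [DecidableEq Y] [AddCommGroup Y] (c : AddChar Y ℂ) :
    Matrix (Option Y) (Option Y) ℂ :=
  Matrix.diagonal fun u => Option.elim u 1 fun r => c r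

/-- matrix of the single-register compressed oracle `cO_ŷ = Comp ∘ O_ŷ ∘ Comp` -/
def cOMat {Y : Type*} [Fintype Y] [DecidableEq Y] [AddCommGroup Y] (c : AddChar Y ℂ) :
    Matrix (Option Y) (Option Y) ℂ :=
  compMat Y * oMat c * compMat Y

/-- a single-register operator (given by its matrix `m`) acting at register `x0` -/
def liftMat {X Y : Type*} [Fintype X] [DecidableEq X] [DecidableEq Y] (x0 : X)
    (m : Matrix (Option Y) (Option Y) ℂ) :
    Matrix (X → Option Y) (X → Option Y) ℂ :=
  Matrix.of fun D' D => if ∀ a, a ≠ x0 → D' a = D a then m (D' x0) (D x0) else 0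

/-- matrix of `cO_{x,ŷ}`: the composition of `cO_{ŷ i}` acting at register `x i` -/
def cOparMat {X Y : Type*} [Fintype X] [DecidableEq X] [Fintype Y] [DecidableEq Y]
    [AddCommGroup Y] {k : ℕ} (x : Fin k → X) (c : Fin k → AddChar Y ℂ) :
    Matrix (X → Option Y) (X → Option Y) ℂ :=
  (List.ofFn fun i : Fin k => liftMat (x i) (cOMat (c i))).prod

/-- matrix of the orthogonal projection onto `span{e_D : D ∈ P}` -/
def projMat {ι : Type*} [DecidableEq ι] (P : Set ι) : Matrix ι ι ℂ := by
  classical exact Matrix.of fun i j => if i = j ∧ i ∈ P then 1 else 0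

/-- the (continuous linear) operator on `ℓ²` given by a matrix -/
def toOp {ι : Type*} [Fintype ι] [DecidableEq ι] (m : Matrix ι ι ℂ) :
    EuclideanSpace ℂ ι →L[ℂ] EuclideanSpace ℂ ι :=
  LinearMap.toContinuousLinearMap (Matrix.toEuclideanLin m)

/-- `D|^x`: the set of databases that coincide with `D` outside of `x` -/
def agreeOff {X Y : Type*} {k : ℕ} (D : X → Option Y) (x : Fin k → X) :
    Set (X → Option Y) :=
  {D' | ∀ a : X, (∀ i, x i ≠ a) → D' a = D a}

/-- The quantum transition capacity `⟦P → P' | X₀⟧_k`: the supremum, over all `x ∈ X₀^k`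
with pairwise distinct entries, all `k`-tuples `ŷ` of characters of `Y` and all databases `D`,
of `‖P'|_{D|^x} ∘ cO_{x,ŷ} ∘ P|_{D|^x}‖` (`0` if the range is empty). -/
def qtc {X Y : Type*} [Fintype X] [DecidableEq X] [Fintype Y] [DecidableEq Y]
    [AddCommGroup Y] (P P' : Set (X → Option Y)) (k : ℕ) (X₀ : Set X) : ℝ :=
  sSup {v : ℝ | ∃ (x : Fin k → X) (c : Fin k → AddChar Y ℂ) (D : X → Option Y),
    Function.Injective x ∧ (∀ i, x i ∈ X₀) ∧
    v = ‖(toOp (projMat (P' ∩ agreeOff D x))).comp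
          ((toOp (cOparMat x c)).comp (toOp (projMat (P ∩ agreeOff D x))))‖}

end

/-- `CHN rel s`: the databases containing an `s`-chain w.r.t. the relation `rel` -/
def CHN {X Y : Type*} (rel : Y → X → Prop) (s : ℕ) : Set (X → Option Y) :=
  {D | ∃ xs : Fin (s + 1) → X, ∀ i : Fin s, ∃ y : Y,
    D (xs i.castSucc) = some y ∧ rel y (xs i.succ)}

/-- `SIZE s`: the databases with at most `s` non-`⊥` entries -/
def SIZE {X Y : Type*} (s : ℕ) : Set (X → Option Y) :=
  {D | {a | D a ≠ none}.Finite ∧ {a | D a ≠ none}.ncard ≤ s}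

section OracleNorms

open scoped Matrix.Norms.L2Operator

/-! ### The operator norm of matrices -/

theorem Matrix.l2_opNorm_le_of_sum_sq_le {n : Type*} [Fintype n] [DecidableEq n]
    (A : Matrix n n ℂ) {b : ℝ} (hb : 0 ≤ b) (h : ∑ i, ∑ j, ‖A i j‖ ^ 2 ≤ b ^ 2) :
    ‖A‖ ≤ b := by
  rw [← Matrix.l2_opNorm_toEuclideanCLM]
  refine ContinuousLinearMap.opNorm_le_bound _ hb fun v => ?_
  refine (sq_le_sq₀ (norm_nonneg _) (by positivity)).mp ?_
  rw [mul_pow, EuclideanSpace.norm_sq_eq, EuclideanSpace.norm_sq_eq]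
  refine le_trans ?_ (mul_le_mul_of_nonneg_right h (by positivity))
  rw [Finset.sum_mul]
  refine Finset.sum_le_sum fun i _ => ?_
  rw [Matrix.ofLp_toEuclideanCLM]
  calc ‖(A.mulVec v.ofLp) i‖ ^ 2 ≤ (∑ j, ‖A i j‖ * ‖v j‖) ^ 2 := by
        gcongr
        refine (norm_sum_le _ _).trans (Finset.sum_le_sum fun j _ => ?_)
        rw [norm_mul]
    _ ≤ _ := Finset.sum_mul_sq_le_sq_mul_sq _ _ _

theorem norm_prod_ofFn_sub_prod_ofFn_le {R : Type*} [NormedRing R] [NormOneClass R] {β : ℝ} :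
    ∀ {k : ℕ} (a b : Fin k → R), (∀ i, ‖a i‖ ≤ 1) → (∀ i, ‖a i - b i‖ ≤ β) →
      ‖(List.ofFn a).prod - (List.ofFn b).prod‖ ≤ (1 + β) ^ k - 1 ∧
        ‖(List.ofFn b).prod‖ ≤ (1 + β) ^ k := by
  intro k
  induction k with
  | zero => intro a b _ _; simp
  | succ k ih =>
    intro a b ha hab
    obtain ⟨h₁, h₂⟩ := ih (fun i => a i.succ) (fun i => b i.succ) (fun i => ha _) (fun i => hab _)
    have hβ : 0 ≤ β := (norm_nonneg _).trans (hab 0)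
    have hb : ‖b 0‖ ≤ 1 + β := by
      have h := norm_sub_le (a 0) (a 0 - b 0)
      rw [sub_sub_cancel] at h
      linarith [ha 0, hab 0]
    simp only [List.ofFn_succ, List.prod_cons]
    set A := (List.ofFn fun i => a i.succ).prod
    set B := (List.ofFn fun i => b i.succ).prod
    constructor
    · have h : a 0 * A - b 0 * B = a 0 * (A - B) + (a 0 - b 0) * B := by noncomm_ring
      rw [h]
      calc _ ≤ ‖a 0‖ * ‖A - B‖ + ‖a 0 - b 0‖ * ‖B‖ :=
            (norm_add_le _ _).trans (add_le_add (norm_mul_le _ _) (norm_mul_le _ _))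
        _ ≤ 1 * ((1 + β) ^ k - 1) + β * (1 + β) ^ k := by
            gcongr
            · exact ha 0
            · exact hab 0
        _ = _ := by ring
    · calc _ ≤ ‖b 0‖ * ‖B‖ := norm_mul_le _ _
        _ ≤ (1 + β) * (1 + β) ^ k := by gcongr
        _ = _ := by ring

theorem one_add_pow_sub_one_le_exp_one_mul {β : ℝ} (hβ : 0 ≤ β) (k : ℕ) (h : k * β ≤ 1) :
    (1 + β) ^ k - 1 ≤ Real.exp 1 * k * β := by
  have h₁ : (1 + β) ^ k ≤ Real.exp (k * β) := by
    rw [Real.exp_nat_mul]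
    gcongr
    linarith [Real.add_one_le_exp β]
  have h₂ : Real.exp (k * β) - 1 ≤ k * β * Real.exp (k * β) := by
    have h₃ := Real.add_one_le_exp (-(k * β))
    have h₄ : Real.exp (-(k * β)) * Real.exp (k * β) = 1 := by
      rw [← Real.exp_add]; simp
    nlinarith [Real.exp_pos (k * β)]
  have h₅ : k * β * Real.exp (k * β) ≤ k * β * Real.exp 1 := by
    gcongr
  linarith

theorem projMat_eq_diagonal {ι : Type*} [DecidableEq ι] (P : Set ι) [DecidablePred (· ∈ P)] :
    (projMat P : Matrix ι ι ℂ) = Matrix.diagonal fun i => if i ∈ P then 1 else 0 := by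
  ext i j
  by_cases hij : i = j <;> simp [projMat, Matrix.diagonal, hij]

theorem norm_projMat_le_one {ι : Type*} [Fintype ι] [DecidableEq ι] (P : Set ι) :
    ‖(projMat P : Matrix ι ι ℂ)‖ ≤ 1 := by
  classical
  rw [projMat_eq_diagonal, Matrix.l2_opNorm_diagonal, pi_norm_le_iff_of_nonneg zero_le_one]
  intro i
  split_ifs <;> simp

theorem projMat_mul_mul_projMat_apply {ι : Type*} [Fintype ι] [DecidableEq ι] (P Q : Set ι)
    (A : Matrix ι ι ℂ) (i j : ι) [Decidable (i ∈ Q ∧ j ∈ P)] :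
    (projMat Q * A * projMat P) i j = if i ∈ Q ∧ j ∈ P then A i j else 0 := by
  classical
  rw [projMat_eq_diagonal, projMat_eq_diagonal, Matrix.mul_diagonal, Matrix.diagonal_mul]
  by_cases hi : i ∈ Q <;> by_cases hj : j ∈ P <;> simp [hi, hj]

theorem norm_toOp_comp_comp {ι : Type*} [Fintype ι] [DecidableEq ι] (A B C : Matrix ι ι ℂ) :
    ‖(toOp A).comp ((toOp B).comp (toOp C))‖ = ‖A * B * C‖ := by
  have h (m : Matrix ι ι ℂ) : toOp m = Matrix.toEuclideanCLM (n := ι) (𝕜 := ℂ) m := rfl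
  rw [← Matrix.l2_opNorm_toEuclideanCLM, map_mul, map_mul, h, h, h, mul_assoc]
  rfl

/-! ### Operators acting at a single register -/

variable {X Y : Type*} [Fintype X] [DecidableEq X] [Fintype Y] [DecidableEq Y]

theorem liftMat_mul (x : X) (m n : Matrix (Option Y) (Option Y) ℂ) :
    liftMat x (m * n) = liftMat x m * liftMat x n := by
  ext D' D
  simp only [liftMat, Matrix.of_apply, Matrix.mul_apply]
  symm
  split_ifs with h
  · symm
    refine Fintype.sum_of_injective (fun w => Function.update D x w)
      (Function.update_injective D x) _ _ ?_ ?_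
    · intro E hE
      rw [if_neg (c := ∀ a, a ≠ x → E a = D a), mul_zero]
      intro hED
      exact hE ⟨E x, Function.update_eq_iff.2 ⟨rfl, fun a ha => (hED a ha).symm⟩⟩
    · intro w
      have h₁ : ∀ a, a ≠ x → D' a = Function.update D x w a := fun a ha => by
        rw [Function.update_of_ne ha, h a ha]
      have h₂ : ∀ a, a ≠ x → Function.update D x w a = D a := fun a ha => by
        rw [Function.update_of_ne ha]
      rw [if_pos h₁, if_pos h₂, Function.update_self]
  · refine Finset.sum_eq_zero fun E _ => ?_
    by_cases h₁ : ∀ a, a ≠ x → D' a = E a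
    · rw [if_neg (c := ∀ a, a ≠ x → E a = D a), mul_zero]
      exact fun h₂ => h fun a ha => (h₁ a ha).trans (h₂ a ha)
    · rw [if_neg h₁, zero_mul]

/-- `liftMat x` as a homomorphism of star algebras -/
def liftMatHom (x : X) :
    Matrix (Option Y) (Option Y) ℂ →⋆ₙₐ[ℂ] Matrix (X → Option Y) (X → Option Y) ℂ where
  toFun := liftMat x
  map_smul' c m := by
    ext D' D
    simp [liftMat]
  map_zero' := by
    ext D' D
    simp [liftMat]
  map_add' m n := by
    ext D' D
    simp only [liftMat, Matrix.of_apply, Matrix.add_apply]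
    split_ifs <;> simp
  map_mul' := liftMat_mul x
  map_star' m := by
    ext D' D
    simp only [liftMat, Matrix.of_apply, Matrix.star_apply]
    simp only [eq_comm (a := D' _)]
    split_ifs <;> simp

theorem norm_liftMat_le (x : X) (m : Matrix (Option Y) (Option Y) ℂ) :
    ‖liftMat x m‖ ≤ ‖m‖ :=
  NonUnitalStarAlgHom.norm_apply_le (liftMatHom x) m

theorem liftMat_sub (x : X) (m n : Matrix (Option Y) (Option Y) ℂ) :
    liftMat x (m - n) = liftMat x m - liftMat x n :=
  map_sub (liftMatHom x) m n

theorem prod_liftMat_apply_ne_zero {k : ℕ} (x : Fin k → X) (hx : Function.Injective x)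
    (m : Fin k → Matrix (Option Y) (Option Y) ℂ) (D' D : X → Option Y)
    (h : (List.ofFn fun i => liftMat (x i) (m i)).prod D' D ≠ 0) :
    (∀ a, (∀ i, x i ≠ a) → D' a = D a) ∧ ∀ i, m i (D' (x i)) (D (x i)) ≠ 0 := by
  induction k generalizing D' with
  | zero =>
    simp only [List.ofFn_zero, List.prod_nil, Matrix.one_apply, ne_eq, ite_eq_right_iff,
      one_ne_zero, imp_false, not_not] at h
    subst h
    exact ⟨fun _ _ => rfl, fun i => i.elim0⟩
  | succ k ih =>
    rw [List.ofFn_succ, List.prod_cons, Matrix.mul_apply] at h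
    obtain ⟨E, -, hE⟩ := Finset.exists_ne_zero_of_sum_ne_zero h
    have hl := left_ne_zero_of_mul hE
    obtain ⟨h₁, h₂⟩ := ih (fun i => x i.succ) (hx.comp (Fin.succ_injective k))
      (fun i => m i.succ) E (right_ne_zero_of_mul hE)
    simp only [liftMat, Matrix.of_apply, ne_eq, ite_eq_right_iff, Classical.not_imp] at hl
    obtain ⟨h₃, h₄⟩ := hl
    refine ⟨fun a ha => (h₃ a (ha 0).symm).trans (h₁ a fun i => ha _), fun i => ?_⟩
    refine Fin.cases ?_ (fun i => ?_) i
    · rwa [h₁ (x 0) fun i hi => Fin.succ_ne_zero i (hx hi)] at h₄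
    · rw [h₃ (x i.succ) fun hi => Fin.succ_ne_zero i (hx hi)]
      exact h₂ i

/-! ### The compressed oracle at a single register -/

theorem inv_ofReal_sqrt_natCast_mul_self (n : ℕ) :
    ((Real.sqrt n : ℝ) : ℂ)⁻¹ * ((Real.sqrt n : ℝ) : ℂ)⁻¹ = (n : ℂ)⁻¹ := by
  rw [← mul_inv, ← Complex.ofReal_mul, Real.mul_self_sqrt (by positivity)]
  simp

theorem compMat_isHermitian : (compMat Y).IsHermitian := by
  ext u v
  rcases u with _ | u <;> rcases v with _ | v <;>
    simp [compMat, Matrix.conjTranspose_apply, eq_comm]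

theorem compMat_mul_self [Nonempty Y] : compMat Y * compMat Y = 1 := by
  have hM : (Fintype.card Y : ℂ) ≠ 0 := Nat.cast_ne_zero.2 Fintype.card_ne_zero
  have hs := inv_ofReal_sqrt_natCast_mul_self (Fintype.card Y)
  ext u v
  rw [Matrix.mul_apply, Fintype.sum_option]
  rcases u with _ | u <;> rcases v with _ | v
  · simp [compMat, hs, hM]
  · simp [compMat, ← Finset.mul_sum, hM]
  · simp [compMat, ← Finset.sum_mul, hM]
  · simp only [compMat, Matrix.of_apply, hs, sub_mul, mul_sub, Finset.sum_sub_distrib,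
      Matrix.one_apply, Option.some.injEq]
    simp [hM]

variable [AddCommGroup Y]

theorem norm_cOMat_le_one (c : AddChar Y ℂ) : ‖cOMat c‖ ≤ 1 := by
  have hC : ‖compMat Y‖ ≤ 1 := by
    refine (CStarRing.norm_of_mem_unitary ?_).le
    rw [Unitary.mem_iff, Matrix.star_eq_conjTranspose, compMat_isHermitian.eq]
    exact ⟨compMat_mul_self, compMat_mul_self⟩
  have hO : ‖oMat c‖ ≤ 1 := by
    rw [oMat, Matrix.l2_opNorm_diagonal, pi_norm_le_iff_of_nonneg zero_le_one]
    rintro (_ | y)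
    · simp
    · simp [AddChar.norm_apply]
  calc ‖cOMat c‖ ≤ ‖compMat Y‖ * ‖oMat c‖ * ‖compMat Y‖ :=
        (norm_mul_le _ _).trans (mul_le_mul_of_nonneg_right (norm_mul_le _ _) (norm_nonneg _))
    _ ≤ 1 * 1 * 1 := by gcongr
    _ = 1 := by norm_num

theorem cOMat_some_none (c : AddChar Y ℂ) (u : Y) :
    cOMat c (some u) none =
      (c u - (∑ y, c y) / Fintype.card Y) * ((Real.sqrt (Fintype.card Y) : ℝ) : ℂ)⁻¹ := by
  rw [cOMat, Matrix.mul_apply, Fintype.sum_option]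
  simp only [oMat, Matrix.mul_diagonal]
  simp only [compMat, Matrix.of_apply, ← Finset.sum_mul, sub_mul, Finset.sum_sub_distrib,
    ← Finset.mul_sum, Option.elim]
  simp [div_eq_inv_mul]

theorem cOMat_some_some (c : AddChar Y ℂ) {u r : Y} (h : u ≠ r) :
    cOMat c (some u) (some r) =
      (1 - c u - c r + (∑ y, c y) / Fintype.card Y) / Fintype.card Y := by
  have hs := inv_ofReal_sqrt_natCast_mul_self (Fintype.card Y)
  rw [cOMat, Matrix.mul_apply, Fintype.sum_option]
  simp only [oMat, Matrix.mul_diagonal]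
  simp only [compMat, Matrix.of_apply, Option.elim, mul_one, hs, sub_mul, mul_sub,
    Finset.sum_sub_distrib, ← Finset.mul_sum, ← Finset.sum_mul]
  simp [h]
  field_simp
  ring

theorem norm_cOMat_some_none_sq_le (c : AddChar Y ℂ) (u : Y) :
    ‖cOMat c (some u) none‖ ^ 2 ≤ 1 / Fintype.card Y := by
  have hM : (Fintype.card Y : ℂ) ≠ 0 := Nat.cast_ne_zero.2 Fintype.card_ne_zero
  rw [cOMat_some_none, norm_mul, mul_pow, norm_inv, Complex.norm_real, inv_pow,
    Real.norm_of_nonneg (Real.sqrt_nonneg _), Real.sq_sqrt (by positivity), ← div_eq_mul_inv]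
  gcongr
  classical
  rw [AddChar.sum_eq_ite]
  split_ifs with hc
  · subst hc
    simp [hM]
  · simp [AddChar.norm_apply]

theorem norm_cOMat_some_some_sq_le (c : AddChar Y ℂ) {u r : Y} (h : u ≠ r) :
    ‖cOMat c (some u) (some r)‖ ^ 2 ≤ 9 / (Fintype.card Y : ℝ) ^ 2 := by
  have hM : (Fintype.card Y : ℂ) ≠ 0 := Nat.cast_ne_zero.2 Fintype.card_ne_zero
  rw [cOMat_some_some c h, norm_div, div_pow, Complex.norm_natCast]
  gcongr
  have h₁ : ‖1 - c u - c r + (∑ y, c y) / Fintype.card Y‖ ≤ 3 := by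
    classical
    rw [AddChar.sum_eq_ite]
    split_ifs with hc
    · subst hc
      simp [hM]
    · rw [zero_div, add_zero]
      refine (norm_sub_le _ _).trans ?_
      have h₂ := norm_sub_le (1 : ℂ) (c u)
      rw [AddChar.norm_apply, norm_one] at h₂
      rw [AddChar.norm_apply]
      linarith
  nlinarith [norm_nonneg (1 - c u - c r + (∑ y, c y) / Fintype.card Y)]

/-- the part of the operator `m` that changes the register content into an element of `L` -/
def jumpPart (L : Finset Y) (m : Matrix (Option Y) (Option Y) ℂ) :
    Matrix (Option Y) (Option Y) ℂ :=
  Matrix.of fun u r => if (∃ y ∈ L, u = some y) ∧ u ≠ r then m u r else 0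

theorem norm_jumpPart_cOMat_le (L : Finset Y) (c : AddChar Y ℂ) :
    ‖jumpPart L (cOMat c)‖ ≤ Real.sqrt (10 * L.card / Fintype.card Y) := by
  have hM : (0 : ℝ) < Fintype.card Y := Nat.cast_pos.2 Fintype.card_pos
  refine Matrix.l2_opNorm_le_of_sum_sq_le _ (Real.sqrt_nonneg _) ?_
  rw [Real.sq_sqrt (by positivity), Fintype.sum_option]
  have h₀ : ∑ r, ‖jumpPart L (cOMat c) none r‖ ^ 2 = 0 := by simp [jumpPart]
  have h₁ (u : Y) : ∑ r, ‖jumpPart L (cOMat c) (some u) r‖ ^ 2 ≤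
      if u ∈ L then 10 / (Fintype.card Y : ℝ) else 0 := by
    split_ifs with hu
    · rw [Fintype.sum_option]
      have h₂ : ‖jumpPart L (cOMat c) (some u) none‖ ^ 2 ≤ 1 / Fintype.card Y := by
        simpa [jumpPart, hu] using norm_cOMat_some_none_sq_le c u
      have h₃ (r : Y) : ‖jumpPart L (cOMat c) (some u) (some r)‖ ^ 2 ≤
          9 / (Fintype.card Y : ℝ) ^ 2 := by
        by_cases hur : u = r
        · simp only [jumpPart, Matrix.of_apply, hur, ne_eq, not_true_eq_false, and_false,
            if_false, norm_zero, zero_pow two_ne_zero]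
          positivity
        · simpa [jumpPart, hu, hur] using norm_cOMat_some_some_sq_le c hur
      have h₄ := Finset.sum_le_sum fun r (_ : r ∈ Finset.univ) => h₃ r
      rw [Finset.sum_const, Finset.card_univ, nsmul_eq_mul] at h₄
      refine (add_le_add h₂ h₄).trans (le_of_eq ?_)
      field_simp
      norm_num
    · simp [jumpPart, hu]
  rw [h₀, zero_add]
  refine (Finset.sum_le_sum fun u _ => h₁ u).trans (le_of_eq ?_)
  simp
  ring

/-! ### Transitions recognized by a local property -/

/-- If every transition from `P` to `P'` changes some queried register into an element of `L`,
then the transition amplitude is governed by the size of `L`. -/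
theorem norm_transition_le {k : ℕ} (x : Fin k → X) (hx : Function.Injective x)
    (c : Fin k → AddChar Y ℂ) (P P' : Set (X → Option Y)) (L : Finset Y)
    (hL : ∀ D ∈ P, ∀ D' ∈ P', (∀ a, (∀ i, x i ≠ a) → D' a = D a) →
      ∃ i, D' (x i) ≠ D (x i) ∧ ∃ y ∈ L, D' (x i) = some y) :
    ‖projMat P' * cOparMat x c * projMat P‖ ≤
      Real.exp 1 * k * Real.sqrt (10 * L.card / Fintype.card Y) := by
  classical
  set β := Real.sqrt (10 * L.card / Fintype.card Y)
  have hβ : 0 ≤ β := Real.sqrt_nonneg _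
  have hproj (A : Matrix (X → Option Y) (X → Option Y) ℂ) :
      ‖projMat P' * A * projMat P‖ ≤ ‖A‖ := by
    calc _ ≤ ‖projMat P'‖ * ‖A‖ * ‖projMat P‖ :=
          (norm_mul_le _ _).trans (mul_le_mul_of_nonneg_right (norm_mul_le _ _) (norm_nonneg _))
      _ ≤ 1 * ‖A‖ * 1 := by
          gcongr
          · exact norm_projMat_le_one P'
          · exact norm_projMat_le_one P
      _ = ‖A‖ := by ring
  have hA (i : Fin k) : ‖liftMat (x i) (cOMat (c i))‖ ≤ 1 :=
    (norm_liftMat_le _ _).trans (norm_cOMat_le_one _)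
  by_cases hkβ : k * β ≤ 1
  · set G := (List.ofFn fun i => liftMat (x i) (cOMat (c i) - jumpPart L (cOMat (c i)))).prod
    have hzero : projMat P' * G * projMat P = 0 := by
      ext D' D
      rw [projMat_mul_mul_projMat_apply, Matrix.zero_apply, ite_eq_right_iff]
      rintro ⟨hD', hD⟩
      by_contra hne
      obtain ⟨h₁, h₂⟩ := prod_liftMat_apply_ne_zero x hx _ D' D hne
      obtain ⟨i, hi, y, hy, hiy⟩ := hL D hD D' hD' h₁
      refine h₂ i ?_
      simp only [Matrix.sub_apply, jumpPart, Matrix.of_apply]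
      rw [if_pos ⟨⟨y, hy, hiy⟩, hi⟩, sub_self]
    have heq : projMat P' * cOparMat x c * projMat P =
        projMat P' * (cOparMat x c - G) * projMat P := by
      rw [mul_sub, sub_mul, hzero, sub_zero]
    rw [heq]
    refine (hproj _).trans ?_
    refine le_trans ?_ (one_add_pow_sub_one_le_exp_one_mul hβ k hkβ)
    refine (norm_prod_ofFn_sub_prod_ofFn_le _ _ hA fun i => ?_).1
    rw [← liftMat_sub, sub_sub_cancel]
    exact (norm_liftMat_le _ _).trans (norm_jumpPart_cOMat_le _ _)
  · have h₁ : ‖cOparMat x c‖ ≤ 1 := by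
      have h := (norm_prod_ofFn_sub_prod_ofFn_le (β := 0) _
        (fun i => liftMat (x i) (cOMat (c i))) hA fun i => by simp).2
      simpa [cOparMat] using h
    refine ((hproj _).trans h₁).trans ?_
    rw [mul_assoc]
    have h₂ := Real.add_one_le_exp (1 : ℝ)
    nlinarith

end OracleNorms

/-! ### Chains -/

/-- Extending the longest chain in `D` requires changing a queried register into a value related
to a queried point or to a point in the support of the database. -/
theorem exists_jump_of_mem_CHN {X Y : Type*} {rel : Y → X → Prop} {k q : ℕ} {x : Fin k → X}
    {D D' : X → Option Y} (hD : D ∉ CHN rel q) (hD' : D' ∈ CHN rel (q + 1))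
    (h : ∀ a, (∀ i, x i ≠ a) → D' a = D a) :
    ∃ i, D' (x i) ≠ D (x i) ∧ ∃ y, D' (x i) = some y ∧
      ∃ a, ((∃ j, x j = a) ∨ D a ≠ none) ∧ rel y a := by
  obtain ⟨xs, hxs⟩ := hD'
  by_contra hcon
  refine hD ⟨fun i => xs i.castSucc, fun i => ?_⟩
  obtain ⟨y, hy, hrel⟩ := hxs i.castSucc
  refine ⟨y, ?_, hrel⟩
  by_contra hne
  have hdiff : D' (xs i.castSucc.castSucc) ≠ D (xs i.castSucc.castSucc) := fun he =>
    hne (he ▸ hy)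
  have hq : ∃ j, x j = xs i.castSucc.castSucc := by
    by_contra hj
    exact hdiff (h _ fun j hj' => hj ⟨j, hj'⟩)
  obtain ⟨j, hj⟩ := hq
  refine hcon ⟨j, hj ▸ hdiff, y, hj ▸ hy, _, ?_, hrel⟩
  by_cases hq' : ∃ j, x j = xs i.castSucc.succ
  · exact Or.inl hq'
  · right
    obtain ⟨y', hy', -⟩ := hxs i.succ
    rw [← Fin.succ_castSucc] at hy'
    rw [← h _ fun j hj' => hq' ⟨j, hj'⟩, hy']
    simp

theorem stmt_14 {X Y : Type*} [Fintype X] [DecidableEq X] [Nonempty X]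
    [Fintype Y] [DecidableEq Y] [AddCommGroup Y]
    (rel : Y → X → Prop) (T : ℕ) (hT : ∀ a : X, {y : Y | rel y a}.ncard ≤ T)
    (k q : ℕ) (hk : 1 ≤ k) (hq : 1 ≤ q) :
    qtc (SIZE (k * (q - 1)) \ CHN rel q) (CHN rel (q + 1)) k Set.univ
      ≤ Real.exp 1 * k * Real.sqrt (10 * k * q * T / Fintype.card Y) := by
  classical
  refine Real.sSup_le ?_ (by positivity)
  rintro v ⟨x, c, D₀, hx, -, rfl⟩
  rw [norm_toOp_comp_comp]
  set P := (SIZE (k * (q - 1)) \ CHN rel q) ∩ agreeOff D₀ x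
  have hbound : ∃ L : Finset Y, L.card ≤ k * q * T ∧
      ∀ D ∈ P, ∀ D' ∈ CHN rel (q + 1) ∩ agreeOff D₀ x, (∀ a, (∀ i, x i ≠ a) → D' a = D a) →
        ∃ i, D' (x i) ≠ D (x i) ∧ ∃ y ∈ L, D' (x i) = some y := by
    rcases P.eq_empty_or_nonempty with hemp | ⟨D₁, ⟨⟨-, hcard⟩, -⟩, hD₁⟩
    · exact ⟨∅, by simp, by simp [hemp]⟩
    let S : Finset X := Finset.univ.image x ∪ Finset.univ.filter fun a => D₁ a ≠ none
    have hS : S.card ≤ k * q := by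
      have h₁ : (Finset.univ.image x).card ≤ k := by
        simpa using Finset.card_image_le (s := (Finset.univ : Finset (Fin k))) (f := x)
      have h₂ : (Finset.univ.filter fun a => D₁ a ≠ none).card ≤ k * (q - 1) := by
        rwa [← Set.ncard_coe_finset, Finset.coe_filter_univ]
      have h₃ := Finset.card_union_le (Finset.univ.image x)
        (Finset.univ.filter fun a => D₁ a ≠ none)
      obtain ⟨q, rfl⟩ := Nat.exists_eq_add_of_le' hq
      rw [Nat.add_sub_cancel] at h₂
      calc S.card ≤ k + k * q := h₃.trans (add_le_add h₁ h₂)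
        _ = k * (q + 1) := by ring
    refine ⟨S.biUnion fun a => Finset.univ.filter fun y => rel y a, ?_, ?_⟩
    · calc _ ≤ S.card * T := Finset.card_biUnion_le_card_mul _ _ _ fun a _ => by
            rw [← Set.ncard_coe_finset, Finset.coe_filter_univ]
            exact hT a
        _ ≤ _ := by gcongr
    · rintro D ⟨⟨-, hD⟩, hDD⟩ D' ⟨hD', -⟩ hoff
      obtain ⟨i, hi, y, hy, a, ha, hrel⟩ := exists_jump_of_mem_CHN hD hD' hoff
      refine ⟨i, hi, y, ?_, hy⟩
      simp only [Finset.mem_biUnion, Finset.mem_filter, Finset.mem_univ, true_and]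
      refine ⟨a, ?_, hrel⟩
      simp only [S, Finset.mem_union, Finset.mem_image, Finset.mem_filter, Finset.mem_univ,
        true_and]
      by_cases hxa : ∃ j, x j = a
      · exact Or.inl hxa
      · have hoffa : ∀ j, x j ≠ a := fun j hj => hxa ⟨j, hj⟩
        rw [hD₁ a hoffa, ← hDD a hoffa]
        exact Or.inr (ha.resolve_left hxa)
  obtain ⟨L, hLcard, hL⟩ := hbound
  refine (norm_transition_le x hx c _ _ L hL).trans ?_
  have h : (L.card : ℝ) ≤ k * q * T := by exact_mod_cast hLcard
  gcongr Real.exp 1 * k * Real.sqrt (?_ / _)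
  linarith
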